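/- Let (X, B, μ, f) be a dissipative measurable system with μ purely atomic, and suppose f is ergodic. If the composition operator T_f on L^p(X) (p ≥ 1) is frequently hypercyclic, then μ(X) < ∞. -/

import Mathlib

open MeasureTheory Set Filter
open scoped ENNReal NNReal

/-- The image of a set under the `n`-th power (`n ∈ ℤ`) of a bijection `f`. -/
def zimg {X : Type*} (f : X → X) (n : ℤ) (B : Set X) : Set X :=
  if 0 ≤ n then f^[n.toNat] '' B else f^[(-n).toNat] ⁻¹' B

/-- `W` is a wandering set for `f`: the sets `fⁿ(W)`, `n ∈ ℤ`, are pairwise disjoint. -/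
def Wandering {X : Type*} (f : X → X) (W : Set X) : Prop :=
  Pairwise fun m n : ℤ => Disjoint (zimg f m W) (zimg f n W)

/-- `W` generates `X`: `X = ⋃_{n ∈ ℤ} fⁿ(W)`. -/
def GeneratedBy {X : Type*} (f : X → X) (W : Set X) : Prop :=
  (⋃ n : ℤ, zimg f n W) = Set.univ

/-- The Summability Condition (SC). -/
def SCcond {X : Type*} [MeasurableSpace X] (μ : Measure X) (f : X → X) : Prop :=
  ∀ ε : ℝ≥0∞, 0 < ε → ∀ B : Set X, MeasurableSet B → μ B < ⊤ →
    ∃ B' : Set X, B' ⊆ B ∧ MeasurableSet B' ∧ μ (B \ B') < ε ∧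
      ∑' n : ℤ, μ (zimg f n B') ≠ ⊤

/-- A measurable system: `μ` σ-finite with `μ(X) > 0`, `f` bijective, bimeasurable,
nonsingular, and `μ(f⁻¹(B)) ≤ c·μ(B)` with `0 < c < ∞`. -/
def MeasSystem {X : Type*} [MeasurableSpace X] (μ : Measure X) (f : X → X) (c : ℝ≥0∞) : Prop :=
  SigmaFinite μ ∧ 0 < μ Set.univ ∧ Function.Bijective f ∧ Measurable f ∧
  (∀ B : Set X, MeasurableSet B → MeasurableSet (f '' B)) ∧
  (∀ B : Set X, MeasurableSet B → (μ (f ⁻¹' B) = 0 ↔ μ B = 0)) ∧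
  0 < c ∧ c ≠ ⊤ ∧ (∀ B : Set X, MeasurableSet B → μ (f ⁻¹' B) ≤ c * μ B)

/-- `f` is dissipative: there is a generating wandering set. -/
def Dissipative {X : Type*} [MeasurableSpace X] (f : X → X) : Prop :=
  ∃ W : Set X, MeasurableSet W ∧ Wandering f W ∧ GeneratedBy f W

/-- A set of natural numbers has positive lower density. -/
def PosLowerDensity (A : Set ℕ) : Prop :=
  0 < Filter.liminf (fun N : ℕ => ((A ∩ Set.Icc 1 N).ncard : ℝ) / N) Filter.atTop

/-- `x` is a recurrent point of `f`. -/
def Recurrent {X : Type*} [TopologicalSpace X] (f : X → X) (x : X) : Prop :=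
  ∀ U : Set X, IsOpen U → x ∈ U → ∃ n : ℕ, 1 ≤ n ∧ f^[n] x ∈ U

/-- A continuous linear operator is frequently hypercyclic. -/
def FreqHC {E : Type*} [NormedAddCommGroup E] [NormedSpace ℝ E] (T : E →L[ℝ] E) : Prop :=
  ∃ φ : E, ∀ U : Set E, IsOpen U → U.Nonempty → PosLowerDensity {n : ℕ | (T ^ n) φ ∈ U}

/-- `d(W) = ‖dμ/dν |_W‖_∞⁻¹`, with the convention `1/∞ = 0`. -/
noncomputable def dSeq {X : Type*} [MeasurableSpace X] (μ ν : Measure X) (W : Set X) : ℝ≥0∞ :=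
  (essSup (μ.rnDeriv ν) (μ.restrict W))⁻¹

open scoped Pointwise Topology symmDiff

/-!
The orbit of an atom `x` is invariant and non-null, so by ergodicity it carries all of `μ`; it
remains to sum `a k = μ {f ^ k x}` over `k : ℤ`. Let `φ` be a frequently hypercyclic vector and `A`
the set of times `n` at which `T ^ n φ` is bounded in norm by `R` and at least `1` at `x`. For
`n ∈ A` the function `T ^ n φ` is at least `1` at `f ^ (k - n) x` for every `k ∈ A`, so Markov's
inequality gives `∑ k ∈ A, a (k - n) ≤ R ^ p`. Averaging over `n ∈ A` with an invariant mean `m`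
that is positive on `A` yields `∑ d, a d * m ((A - d) ∩ A) < ∞`. Since finitely many translates of
`A` together meet every translate of `A` in mean at least `m A / 2`, the weights `m ((A - d) ∩ A)`
are bounded below on a syndetic set of `d`, and the growth bound `a k ≤ c * a (k + 1)` extends the
summability to all of `ℤ`. If the orbit is periodic it is finite, and so is its measure.
-/

section AddContent

variable {α M : Type*} {C : Set (Set α)}

theorem isSetRing_univ : IsSetRing (univ : Set (Set α)) where
  empty_mem := mem_univ _
  union_mem _ _ _ _ := mem_univ _
  sdiff_mem _ _ _ _ := mem_univ _

theorem addContent_inter_add_sdiff [AddCommMonoid M] {m : AddContent M C} (hC : IsSetRing C)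
    {s t : Set α} (hs : s ∈ C) (ht : t ∈ C) : m (s ∩ t) + m (s \ t) = m s := by
  rw [← addContent_union hC (hC.inter_mem hs ht) (hC.sdiff_mem hs ht) disjoint_inf_sdiff,
    inter_union_sdiff]

/-- The left-hand side plays the role of the integral of the simple function
`∑ i ∈ S, a i • 1_{B i}` over `t`. Peeling off `B j` lowers the bound to `K - a j` on `t ∩ B j`. -/
theorem sum_mul_addContent_inter_le {ι : Type*} {m : AddContent ℝ≥0∞ C} (hC : IsSetRing C)
    {a : ι → ℝ≥0∞} {B : ι → Set α} {S : Finset ι} (hB : ∀ i ∈ S, B i ∈ C) {t : Set α} (ht : t ∈ C)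
    {K : ℝ≥0∞} (hKtop : K ≠ ⊤)
    (hK : ∀ x ∈ t, ∑ i ∈ S, (B i).indicator (fun _ => a i) x ≤ K) :
    ∑ i ∈ S, a i * m (B i ∩ t) ≤ K * m t := by
  classical
  induction S using Finset.induction generalizing t K with
  | empty => simp
  | insert j S hj ih =>
    simp only [Finset.sum_insert hj] at hK ⊢
    have hBj : B j ∈ C := hB j (Finset.mem_insert_self j S)
    have hBS : ∀ i ∈ S, B i ∈ C := fun i hi => hB i (Finset.mem_insert_of_mem hi)
    have inside : a j * m (t ∩ B j) + ∑ i ∈ S, a i * m (B i ∩ (t ∩ B j)) ≤ K * m (t ∩ B j) := by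
      obtain hempty | ⟨y, hyt, hyj⟩ := (t ∩ B j).eq_empty_or_nonempty
      · simp [hempty]
      have haK : a j ≤ K := by
        simpa [hyj] using le_self_add.trans (hK y hyt)
      have hrest : ∑ i ∈ S, a i * m (B i ∩ (t ∩ B j)) ≤ (K - a j) * m (t ∩ B j) := by
        refine ih hBS (hC.inter_mem ht hBj) (ENNReal.sub_ne_top hKtop) fun x hx => ?_
        have hKx := hK x hx.1
        rw [indicator_of_mem hx.2, add_comm] at hKx
        exact ENNReal.le_sub_of_add_le_right (ne_top_of_le_ne_top hKtop haK) hKx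
      calc _ ≤ a j * m (t ∩ B j) + (K - a j) * m (t ∩ B j) := by gcongr
        _ = K * m (t ∩ B j) := by rw [← add_mul, add_tsub_cancel_of_le haK]
    have outside : ∑ i ∈ S, a i * m (B i ∩ (t \ B j)) ≤ K * m (t \ B j) :=
      ih hBS (hC.sdiff_mem ht hBj) hKtop fun x hx => le_add_self.trans (hK x hx.1)
    have split : ∀ i ∈ S, m (B i ∩ t) = m (B i ∩ (t ∩ B j)) + m (B i ∩ (t \ B j)) := fun i hi => by
      rw [← inter_assoc, ← inter_sdiff_assoc,
        addContent_inter_add_sdiff hC (hC.inter_mem (hBS i hi) ht) hBj]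
    calc a j * m (B j ∩ t) + ∑ i ∈ S, a i * m (B i ∩ t)
        = (a j * m (t ∩ B j) + ∑ i ∈ S, a i * m (B i ∩ (t ∩ B j)))
            + ∑ i ∈ S, a i * m (B i ∩ (t \ B j)) := by
          rw [Finset.sum_congr rfl fun i hi => by rw [split i hi, mul_add],
            Finset.sum_add_distrib, inter_comm (B j) t, add_assoc]
      _ ≤ K * m (t ∩ B j) + K * m (t \ B j) := add_le_add inside outside
      _ = K * m t := by rw [← mul_add, addContent_inter_add_sdiff hC ht hBj]

end AddContent

theorem tsum_mul_addContent_vadd_inter_le {G : Type*} [AddGroup G]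
    {m : AddContent ℝ≥0∞ (univ : Set (Set G))} {A : Set G} {a : G → ℝ≥0∞} {K : ℝ≥0∞} (hK : K ≠ ⊤)
    (h : ∀ n ∈ A, ∑' k : A, a (k - n) ≤ K) : ∑' d : G, a d * m ((-d +ᵥ A) ∩ A) ≤ K * m A := by
  refine ENNReal.summable.tsum_le_of_sum_le fun S => ?_
  refine sum_mul_addContent_inter_le isSetRing_univ (fun _ _ => mem_univ _) (mem_univ _) hK ?_
  intro n hn
  calc ∑ d ∈ S, (-d +ᵥ A).indicator (fun _ => a d) n
      ≤ ∑' d : G, (-d +ᵥ A).indicator (fun _ => a d) n := ENNReal.sum_le_tsum S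
    _ = ∑' k, A.indicator (fun k => a (k - n)) k := by
        rw [← (Equiv.addRight n).tsum_eq (A.indicator fun k => a (k - n))]
        refine tsum_congr fun d => ?_
        by_cases hd : d + n ∈ A <;> simp [indicator, mem_neg_vadd_set_iff, hd]
    _ = ∑' k : A, a (k - n) := (tsum_subtype A fun k => a (k - n)).symm
    _ ≤ K := h n hn

/-- An invariant mean on the group `G`, encoded by the measures of sets: a finitely additive
translation-invariant probability defined on all subsets of `G`. -/
structure IsInvariantMean {G : Type*} [AddGroup G]
    (m : AddContent ℝ≥0∞ (univ : Set (Set G))) : Prop where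
  univ_eq_one : m univ = 1
  vadd_eq : ∀ (g : G) (s : Set G), m (g +ᵥ s) = m s

namespace IsInvariantMean

section AddGroup

variable {G : Type*} [AddGroup G] {m : AddContent ℝ≥0∞ (univ : Set (Set G))}

theorem le_one (hm : IsInvariantMean m) (s : Set G) : m s ≤ 1 :=
  hm.univ_eq_one ▸
    addContent_mono isSetRing_univ.isSetSemiring (mem_univ _) (mem_univ _) (subset_univ s)

theorem ne_top (hm : IsInvariantMean m) (s : Set G) : m s ≠ ⊤ :=
  ne_top_of_le_ne_top ENNReal.one_ne_top (hm.le_one s)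

theorem exists_finset_forall_half_le_sum (hm : IsInvariantMean m) (A : Set G) :
    ∃ F : Finset G, ∀ g : G, m A / 2 ≤ ∑ r ∈ F, m ((g +ᵥ A) ∩ (r +ᵥ A)) := by
  classical
  obtain hA | hA := eq_or_ne (m A) 0
  · exact ⟨∅, by simp [hA]⟩
  let U (F : Finset G) : Set G := ⋃ r ∈ F, r +ᵥ A
  have hsup_ne_top : ⨆ F, m (U F) ≠ ⊤ :=
    ne_top_of_le_ne_top ENNReal.one_ne_top (iSup_le fun F => hm.le_one _)
  have hsup_pos : ⨆ F, m (U F) ≠ 0 := by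
    refine fun h => hA (le_zero_iff.1 ?_)
    simpa [U, hm.vadd_eq, h] using le_iSup (fun F => m (U F)) {0}
  obtain ⟨F, hF⟩ : ∃ F, (⨆ F, m (U F)) - m A / 2 < m (U F) :=
    lt_iSup_iff.1 (ENNReal.sub_lt_self hsup_ne_top hsup_pos (ENNReal.half_pos hA).ne')
  refine ⟨F, fun g => ?_⟩
  -- Adding one more translate to an almost maximal union gains at most `m A / 2`.
  have hescape : m ((g +ᵥ A) \ U F) ≤ m A / 2 := by
    refine (ENNReal.add_le_add_iff_left (hm.ne_top (U F))).1 ?_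
    calc m (U F) + m ((g +ᵥ A) \ U F) = m (U (insert g F)) := by
          rw [← addContent_union isSetRing_univ (mem_univ _) (mem_univ _) disjoint_sdiff_self_right,
            union_sdiff_self, union_comm]
          simp only [U, Finset.set_biUnion_insert]
      _ ≤ ⨆ F, m (U F) := le_iSup (fun F => m (U F)) (insert g F)
      _ ≤ m (U F) + m A / 2 := tsub_le_iff_right.1 hF.le
  calc m A / 2 = m (g +ᵥ A) - m A / 2 := by rw [hm.vadd_eq, ENNReal.sub_half (hm.ne_top A)]
    _ ≤ m ((g +ᵥ A) ∩ U F) := by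
        rw [tsub_le_iff_right, ← addContent_inter_add_sdiff isSetRing_univ (mem_univ (g +ᵥ A))
          (mem_univ (U F))]
        gcongr
    _ ≤ ∑ r ∈ F, m ((g +ᵥ A) ∩ (r +ᵥ A)) := by
        rw [inter_iUnion₂]
        exact addContent_biUnion_le isSetRing_univ fun _ _ => mem_univ _

end AddGroup

section Int

variable {m : AddContent ℝ≥0∞ (univ : Set (Set ℤ))}

/-- The shifts are taken in `ℕ` because a growth bound `a k ≤ c * a (k + 1)` controls only forward
shifts. -/
theorem exists_finset_nat_forall_half_le_sum (hm : IsInvariantMean m) (A : Set ℤ) :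
    ∃ J : Finset ℕ, ∀ k : ℤ, m A / 2 ≤ ∑ j ∈ J, m ((-(k + j) +ᵥ A) ∩ A) := by
  classical
  obtain ⟨F, hF⟩ := hm.exists_finset_forall_half_le_sum A
  obtain ⟨b, hb⟩ := F.bddBelow
  have hcast (r : ℤ) (hr : r ∈ F) : ((r - b).toNat : ℤ) = r - b :=
    Int.toNat_of_nonneg (sub_nonneg.2 (hb hr))
  refine ⟨F.image fun r => (r - b).toNat, fun k => (hF (-(k - b))).trans_eq ?_⟩
  rw [Finset.sum_image fun r hr s hs h => by grind]
  refine Finset.sum_congr rfl fun r hr => ?_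
  rw [hcast r hr, ← hm.vadd_eq (-r), vadd_set_inter, vadd_vadd, vadd_vadd, neg_add_cancel,
    zero_vadd]
  congr 3
  ring

end Int

end IsInvariantMean

theorem le_pow_mul_of_le_mul_succ {R : Type*} [Semiring R] [PartialOrder R] [IsOrderedRing R]
    {a : ℤ → R} {c : R} (hc : 0 ≤ c) (h : ∀ k, a k ≤ c * a (k + 1))
    (k : ℤ) (j : ℕ) : a k ≤ c ^ j * a (k + j) := by
  induction j with
  | zero => simp
  | succ j ih =>
    calc a k ≤ c ^ j * a (k + j) := ih
      _ ≤ c ^ j * (c * a (k + j + 1)) := by gcongr; exact h _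
      _ = c ^ (j + 1) * a (k + (j + 1 : ℕ)) := by push_cast; rw [pow_succ, mul_assoc, add_assoc]

theorem IsInvariantMean.tsum_ne_top_of_forall_tsum_sub_le {m : AddContent ℝ≥0∞ (univ : Set (Set ℤ))}
    (hm : IsInvariantMean m) {A : Set ℤ} (hA : m A ≠ 0) {a : ℤ → ℝ≥0∞} {c K : ℝ≥0∞} (hc : c ≠ ⊤)
    (ha : ∀ k, a k ≤ c * a (k + 1)) (hK : K ≠ ⊤) (h : ∀ n ∈ A, ∑' k : A, a (k - n) ≤ K) :
    ∑' k, a k ≠ ⊤ := by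
  obtain ⟨J, hJ⟩ := hm.exists_finset_nat_forall_half_le_sum A
  let ρ (d : ℤ) : ℝ≥0∞ := m ((-d +ᵥ A) ∩ A)
  have hbound : (∑' k, a k) * (m A / 2) ≤ ∑ j ∈ J, c ^ j * (K * m A) :=
    calc (∑' k, a k) * (m A / 2) = ∑' k, a k * (m A / 2) := ENNReal.tsum_mul_right.symm
      _ ≤ ∑' k, ∑ j ∈ J, a k * ρ (k + j) := by
          gcongr with k
          rw [← Finset.mul_sum]
          gcongr
          exact hJ k
      _ ≤ ∑' k, ∑ j ∈ J, c ^ j * (a (k + j) * ρ (k + j)) := by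
          refine ENNReal.tsum_le_tsum fun k => Finset.sum_le_sum fun j _ => ?_
          rw [← mul_assoc]
          gcongr ?_ * _
          exact le_pow_mul_of_le_mul_succ zero_le ha k j
      _ = ∑ j ∈ J, c ^ j * ∑' d, a d * ρ d := by
          rw [Summable.tsum_finsetSum fun _ _ => ENNReal.summable]
          refine Finset.sum_congr rfl fun j _ => ?_
          rw [ENNReal.tsum_mul_left, ← (Equiv.addRight (j : ℤ)).tsum_eq fun d => a d * ρ d]
          rfl
      _ ≤ ∑ j ∈ J, c ^ j * (K * m A) := by
          gcongr
          exact tsum_mul_addContent_vadd_inter_le hK h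
  have hfinite : ∑ j ∈ J, c ^ j * (K * m A) ≠ ⊤ := ENNReal.sum_ne_top.2 fun j _ =>
    ENNReal.mul_ne_top (ENNReal.pow_ne_top hc) (ENNReal.mul_ne_top hK (hm.ne_top A))
  exact (ENNReal.lt_top_of_mul_ne_top_left (ne_top_of_le_ne_top hfinite hbound)
    (ENNReal.half_pos hA).ne').ne

theorem exists_isInvariantMean_eq_mean {G ι : Type*} [AddGroup G] [MeasurableSpace G]
    [DiscreteMeasurableSpace G] {μ : Measure G} [VAddInvariantMeasure G G μ] {u : Ultrafilter ι}
    {F : ι → Set G} (hF : IsAddFoelner G μ u F) :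
    ∃ m : AddContent ℝ≥0∞ (univ : Set (Set G)),
      IsInvariantMean m ∧ ∀ s, m s = IsAddFoelner.mean μ u F s := by
  have hempty : IsAddFoelner.mean μ u F ∅ = 0 :=
    tendsto_nhds_unique (hF.tendsto_nhds_mean ∅) (by simp)
  refine ⟨isSetRing_univ.addContent_of_union (IsAddFoelner.mean μ u F) hempty fun _ _ =>
    hF.mean_union_eq_add_of_disjoint _ _ .of_discrete, ⟨?_, ?_⟩, fun _ => rfl⟩
  · exact hF.mean_univ_eq_zero
  · exact hF.mean_vadd_eq_mean

theorem count_vadd_Icc_symmDiff_le (g a b : ℤ) :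
    Measure.count ((g +ᵥ Icc a b) ∆ Icc a b) ≤ (4 * g.natAbs : ℕ) := by
  have hsub : (g +ᵥ Icc a b) ∆ Icc a b ⊆
      (Finset.Ico (a - |g|) (a + |g|) ∪ Finset.Ioc (b - |g|) (b + |g|) : Finset ℤ) := by
    intro k
    simp only [mem_symmDiff, mem_vadd_set_iff_neg_vadd_mem, vadd_eq_add, mem_Icc,
      Finset.coe_union, Finset.coe_Ico, Finset.coe_Ioc, mem_union, mem_Ico, mem_Ioc]
    grind
  refine (measure_mono hsub).trans ?_
  rw [Measure.count_apply_finset]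
  norm_cast
  refine (Finset.card_union_le _ _).trans ?_
  simp only [Int.card_Ico, Int.card_Ioc]
  grind

theorem count_Icc_one_natCast (N : ℕ) : Measure.count (Icc (1 : ℤ) N) = N := by
  rw [← Finset.coe_Icc, Measure.count_apply_finset]
  simp

theorem isAddFoelner_count_Icc_one :
    IsAddFoelner ℤ Measure.count atTop fun N : ℕ => Icc (1 : ℤ) N := by
  refine ⟨.of_forall fun _ => measurableSet_Icc, ?_, .of_forall fun N => ?_, fun g => ?_⟩
  · filter_upwards [eventually_ne_atTop 0] with N hN
    simpa [count_Icc_one_natCast] using hN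
  · simp [count_Icc_one_natCast]
  · refine tendsto_of_tendsto_of_tendsto_of_le_of_le tendsto_const_nhds
      (h := fun N : ℕ => ((4 * g.natAbs : ℕ) : ℝ≥0∞) / N) ?_ (fun _ => zero_le) fun N => ?_
    · exact ENNReal.Tendsto.const_div ENNReal.tendsto_nat_nhds_top
        (.inr (ENNReal.natCast_ne_top _)) |>.trans (by simp)
    · simp only [count_Icc_one_natCast]
      gcongr
      exact count_vadd_Icc_symmDiff_le g 1 N

/-- Positive upper density of a set of natural numbers, in the convention of `PosLowerDensity`. -/
def PosUpperDensity (A : Set ℕ) : Prop :=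
  0 < limsup (fun N : ℕ => ((A ∩ Icc 1 N).ncard : ℝ) / N) atTop

theorem ncard_inter_Icc_div_mem_Icc (A : Set ℕ) (N : ℕ) :
    ((A ∩ Icc 1 N).ncard : ℝ) / N ∈ Icc (0 : ℝ) 1 := by
  refine ⟨by positivity, div_le_one_of_le₀ ?_ N.cast_nonneg⟩
  have hcard : (A ∩ Icc 1 N).ncard ≤ (Icc 1 N).ncard :=
    ncard_le_ncard inter_subset_right (finite_Icc 1 N)
  rw [← Finset.coe_Icc, ncard_coe_finset, Nat.card_Icc, Nat.add_sub_cancel] at hcard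
  exact_mod_cast hcard

theorem PosLowerDensity.posUpperDensity {A : Set ℕ} (hA : PosLowerDensity A) :
    PosUpperDensity A :=
  hA.trans_le <| liminf_le_limsup
    (isBoundedUnder_of ⟨1, fun N => (ncard_inter_Icc_div_mem_Icc A N).2⟩)
    (isBoundedUnder_of ⟨0, fun N => (ncard_inter_Icc_div_mem_Icc A N).1⟩)

theorem count_image_natCast_inter_Icc (A : Set ℕ) (N : ℕ) :
    Measure.count (((↑) '' A : Set ℤ) ∩ Icc 1 N) = ((A ∩ Icc 1 N).ncard : ℝ≥0∞) := by
  have himage : ((↑) '' A : Set ℤ) ∩ Icc 1 N = (↑) '' (A ∩ Icc 1 N) := by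
    ext k
    simp only [mem_inter_iff, mem_image, mem_Icc]
    grind
  rw [himage, Measure.count_apply .of_discrete, Nat.cast_injective.encard_image,
    ← ((finite_Icc 1 N).inter_of_right A).cast_ncard_eq]
  rfl

theorem PosUpperDensity.exists_isInvariantMean {A : Set ℕ} (hA : PosUpperDensity A) :
    ∃ m : AddContent ℝ≥0∞ (univ : Set (Set ℤ)), IsInvariantMean m ∧ m ((↑) '' A) ≠ 0 := by
  obtain ⟨δ, hδ, hδA⟩ := exists_between hA
  have hfreq : ∃ᶠ N : ℕ in atTop, δ < ((A ∩ Icc 1 N).ncard : ℝ) / N :=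
    frequently_lt_of_lt_limsup
      (isBoundedUnder_of ⟨0, fun N => (ncard_inter_Icc_div_mem_Icc A N).1⟩).isCoboundedUnder_le hδA
  have := frequently_iff_neBot.1 hfreq
  obtain ⟨u, hu⟩ := Ultrafilter.exists_le (atTop ⊓ 𝓟 {N : ℕ | δ < ((A ∩ Icc 1 N).ncard : ℝ) / N})
  have hFoelner := isAddFoelner_count_Icc_one.mono (hu.trans inf_le_left)
  obtain ⟨m, hm, hmean⟩ := exists_isInvariantMean_eq_mean hFoelner
  refine ⟨m, hm, ?_⟩
  suffices ENNReal.ofReal δ ≤ m ((↑) '' A) from ((ENNReal.ofReal_pos.2 hδ).trans_le this).ne'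
  rw [hmean]
  refine ge_of_tendsto (hFoelner.tendsto_nhds_mean _) ?_
  filter_upwards [hu (mem_inf_of_right (mem_principal_self _)),
    hu (mem_inf_of_left (eventually_gt_atTop 0))] with N (hN : δ < _) (hpos : 0 < N)
  rw [count_image_natCast_inter_Icc, count_Icc_one_natCast, ← ENNReal.ofReal_natCast,
    ← ENNReal.ofReal_natCast, ← ENNReal.ofReal_div_of_pos (Nat.cast_pos.2 hpos)]
  exact ENNReal.ofReal_le_ofReal hN.le

section Atoms

variable {X E : Type*} [MeasurableSpace X] [NormedAddCommGroup E] {μ : Measure X} {p : ℝ≥0∞} {x : X}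

theorem of_ae_of_measure_singleton_ne_zero {P : X → Prop} (h : ∀ᵐ y ∂μ, P y) (hx : μ {x} ≠ 0) :
    P x := by
  by_contra hPx
  exact hx (measure_mono_null (singleton_subset_iff.2 hPx) h)

variable [MeasurableSingletonClass X]

theorem measure_singleton_rpow_mul_enorm_le_eLpNorm (hp : p ≠ 0) (hx : μ {x} ≠ 0) (g : X → E) :
    μ {x} ^ (1 / p).toReal * ‖g x‖ₑ ≤ eLpNorm g p μ :=
  calc μ {x} ^ (1 / p).toReal * ‖g x‖ₑ = eLpNorm g p (μ.restrict {x}) := by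
        rw [Measure.restrict_singleton, eLpNorm_smul_measure_of_ne_zero hx, eLpNorm_dirac g x hp,
          smul_eq_mul]
    _ ≤ eLpNorm g p μ := eLpNorm_mono_measure g Measure.restrict_le_self

theorem continuous_Lp_apply [Fact (1 ≤ p)] (hx : μ {x} ≠ 0) :
    Continuous fun ψ : Lp E p μ => ψ x := by
  have hp : p ≠ 0 := (zero_lt_one.trans_le Fact.out).ne'
  set w := μ {x} ^ (1 / p).toReal
  have hw : w ≠ 0 := by simp [w, ENNReal.rpow_eq_zero_iff, hx]
  refine LipschitzWith.continuous (K := w⁻¹.toNNReal) fun ψ χ => ?_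
  have hsub : ψ x - χ x = (ψ - χ : Lp E p μ) x :=
    (of_ae_of_measure_singleton_ne_zero (Lp.coeFn_sub ψ χ) hx).symm
  rw [ENNReal.coe_toNNReal (ENNReal.inv_ne_top.2 hw), edist_eq_enorm_sub, edist_eq_enorm_sub, hsub,
    mul_comm, ← div_eq_mul_inv, ENNReal.le_div_iff_mul_le (.inl hw) (.inr enorm_ne_top), mul_comm,
    Lp.enorm_def]
  exact measure_singleton_rpow_mul_enorm_le_eLpNorm hp hx _

theorem exists_isOpen_forall_enorm_le_and_one_le [NormedSpace ℝ E] [Nontrivial E] [Fact (1 ≤ p)]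
    (hx : μ {x} ≠ 0) (hx_top : μ {x} ≠ ⊤) :
    ∃ (U : Set (Lp E p μ)) (R : ℝ≥0∞), IsOpen U ∧ U.Nonempty ∧ R ≠ ⊤ ∧
      ∀ ψ ∈ U, ‖ψ‖ₑ ≤ R ∧ 1 ≤ ‖ψ x‖ₑ := by
  obtain ⟨v, hv⟩ := NormedSpace.exists_lt_norm ℝ E 1
  let χ : Lp E p μ := indicatorConstLp p (measurableSet_singleton x) hx_top v
  have hχ : χ x = v := of_ae_of_measure_singleton_ne_zero indicatorConstLp_coeFn_mem hx rfl
  refine ⟨Metric.ball 0 (‖χ‖ + 1) ∩ {ψ | 1 < ‖ψ x‖}, ENNReal.ofReal (‖χ‖ + 1),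
    Metric.isOpen_ball.inter (isOpen_lt continuous_const (continuous_Lp_apply hx).norm),
    ⟨χ, by simp, by simpa only [mem_ofPred_eq, hχ]⟩, ENNReal.ofReal_ne_top, fun ψ hψ => ⟨?_, ?_⟩⟩
  · rw [← ofReal_norm]
    exact ENNReal.ofReal_le_ofReal (mem_ball_zero_iff.1 hψ.1).le
  · rw [← ofReal_norm, ENNReal.one_le_ofReal]
    exact hψ.2.le

theorem tsum_measure_singleton_le_enorm_rpow {ι : Type*} [Countable ι] (hp0 : p ≠ 0) (hp : p ≠ ⊤)
    (ψ : Lp E p μ) {g : ι → X} (hg : g.Injective) (h : ∀ i, 1 ≤ ‖ψ (g i)‖ₑ) :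
    ∑' i, μ {g i} ≤ ‖ψ‖ₑ ^ p.toReal :=
  calc ∑' i, μ {g i} = μ (⋃ i, {g i}) :=
        (measure_iUnion (fun _ _ hij => disjoint_singleton.2 (hg.ne hij))
          fun _ => measurableSet_singleton _).symm
    _ ≤ μ {y | 1 ≤ ‖ψ y‖ₑ} := measure_mono (iUnion_subset fun i => singleton_subset_iff.2 (h i))
    _ ≤ ‖ψ‖ₑ ^ p.toReal := by
        simpa [Lp.enorm_def] using
          mul_meas_ge_le_pow_eLpNorm' μ hp0 hp (Lp.aestronglyMeasurable ψ) 1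

end Atoms

/-- Upper frequent hypercyclicity of an operator: some orbit visits every nonempty open set along a
set of times of positive upper density. -/
def UpperFreqHC {E : Type*} [NormedAddCommGroup E] [NormedSpace ℝ E] (T : E →L[ℝ] E) : Prop :=
  ∃ φ : E, ∀ U : Set E, IsOpen U → U.Nonempty → PosUpperDensity {n : ℕ | (T ^ n) φ ∈ U}

theorem FreqHC.upperFreqHC {E : Type*} [NormedAddCommGroup E] [NormedSpace ℝ E] {T : E →L[ℝ] E}
    (hT : FreqHC T) : UpperFreqHC T :=
  hT.imp fun _ h U hU hne => (h U hU hne).posUpperDensity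

theorem finite_range_zpow_apply_of_not_injective {X : Type*} {e : Equiv.Perm X} {x : X}
    (h : ¬ Function.Injective fun n : ℤ => (e ^ n) x) : (range fun n : ℤ => (e ^ n) x).Finite := by
  simp only [Function.not_injective_iff] at h
  obtain ⟨a, b, hab, hne⟩ := h
  wlog hlt : a < b generalizing a b
  · exact this b a hab.symm hne.symm (hne.lt_or_gt.resolve_left hlt)
  have hperiod : Function.Periodic (fun n : ℤ => (e ^ n) x) (b - a) := fun n => by
    change (e ^ (n + (b - a))) x = (e ^ n) x
    rw [show n + (b - a) = (n - a) + b by ring, zpow_add, Equiv.Perm.mul_apply, ← hab,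
      ← Equiv.Perm.mul_apply, ← zpow_add, sub_add_cancel]
  rw [← hperiod.image_Icc (sub_pos.2 hlt) 0]
  exact (finite_Icc _ _).image _

section Orbit

variable {X E : Type*} [MeasurableSpace X] [NormedAddCommGroup E] [NormedSpace ℝ E]
  {μ : Measure X} {p c : ℝ≥0∞} [Fact (1 ≤ p)] {e : Equiv.Perm X} {x : X}
  {T : Lp E p μ →L[ℝ] Lp E p μ}

theorem measure_singleton_zpow_apply_ne_zero (he : ∀ y, μ {e y} ≠ 0 ↔ μ {y} ≠ 0) (hx : μ {x} ≠ 0)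
    (n : ℤ) : μ {(e ^ n) x} ≠ 0 :=
  (Equiv.bijOn (s := {y | μ {y} ≠ 0}) (t := {y | μ {y} ≠ 0}) e he |>.perm_zpow n).mapsTo hx

theorem coeFn_pow_apply {g : X → X} (hg : ∀ y, μ {y} ≠ 0 → μ {g y} ≠ 0)
    (hT : ∀ φ : Lp E p μ, (T φ : X → E) =ᵐ[μ] φ ∘ g) (φ : Lp E p μ) (n : ℕ) (hx : μ {x} ≠ 0) :
    ((T ^ n) φ) x = φ (g^[n] x) := by
  induction n generalizing x with
  | zero => simp
  | succ n ih =>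
    rw [pow_succ', mul_apply_eq_comp, of_ae_of_measure_singleton_ne_zero (hT _) hx,
      Function.comp_apply, ih (hg x hx), Function.iterate_succ_apply]

variable [MeasurableSingletonClass X]

theorem tsum_measure_zpow_apply_ne_top [Nontrivial E] (hp : p ≠ ⊤) (hc : c ≠ ⊤)
    (he : ∀ y, μ {e y} ≠ 0 ↔ μ {y} ≠ 0) (hec : ∀ y, μ {y} ≤ c * μ {e y})
    (hT : ∀ φ : Lp E p μ, (T φ : X → E) =ᵐ[μ] φ ∘ e) (hhc : UpperFreqHC T)
    (hx : μ {x} ≠ 0) (hx_top : μ {x} ≠ ⊤) (hinj : Function.Injective fun n : ℤ => (e ^ n) x) :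
    ∑' n : ℤ, μ {(e ^ n) x} ≠ ⊤ := by
  have hp0 : p ≠ 0 := (zero_lt_one.trans_le Fact.out).ne'
  obtain ⟨φ, hφ⟩ := hhc
  obtain ⟨U, R, hU, hUne, hR, hUR⟩ := exists_isOpen_forall_enorm_le_and_one_le (E := E) (p := p)
    hx hx_top
  obtain ⟨m, hm, hmA⟩ := (hφ U hU hUne).exists_isInvariantMean
  have hmap (y : X) : μ {y} ≠ 0 → μ {e y} ≠ 0 := (he y).2
  have hstep (k : ℤ) : μ {(e ^ k) x} ≤ c * μ {(e ^ (k + 1)) x} := by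
    rw [add_comm, zpow_one_add, Equiv.Perm.mul_apply]
    exact hec _
  have hRp : R ^ p.toReal ≠ ⊤ := ENNReal.rpow_ne_top_of_nonneg ENNReal.toReal_nonneg hR
  refine hm.tsum_ne_top_of_forall_tsum_sub_le hmA hc hstep hRp ?_
  rintro _ ⟨n, hn, rfl⟩
  refine (tsum_measure_singleton_le_enorm_rpow hp0 hp ((T ^ n) φ)
    (g := fun k : ((↑) '' {n : ℕ | (T ^ n) φ ∈ U} : Set ℤ) => (e ^ ((k : ℤ) - n)) x)
    (fun k l hkl => Subtype.ext (sub_left_injective (hinj hkl))) ?_).trans ?_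
  · rintro ⟨_, k, hk, rfl⟩
    have hreturn : ((T ^ n) φ) ((e ^ ((k : ℤ) - n)) x) = ((T ^ k) φ) x := by
      rw [coeFn_pow_apply hmap hT φ n (measure_singleton_zpow_apply_ne_zero he hx _),
        coeFn_pow_apply hmap hT φ k hx, Equiv.Perm.iterate_eq_pow, Equiv.Perm.iterate_eq_pow,
        ← Equiv.Perm.mul_apply, ← zpow_natCast, ← zpow_add, add_sub_cancel, zpow_natCast]
    exact hreturn ▸ (hUR _ hk).2
  · gcongr
    exact (hUR _ hn).1

theorem measure_range_zpow_apply_ne_top [SigmaFinite μ] [Nontrivial E] (hp : p ≠ ⊤) (hc : c ≠ ⊤)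
    (he : ∀ y, μ {e y} ≠ 0 ↔ μ {y} ≠ 0) (hec : ∀ y, μ {y} ≤ c * μ {e y})
    (hT : ∀ φ : Lp E p μ, (T φ : X → E) =ᵐ[μ] φ ∘ e) (hhc : UpperFreqHC T) (hx : μ {x} ≠ 0) :
    μ (range fun n : ℤ => (e ^ n) x) ≠ ⊤ := by
  have hsing (y : X) : μ {y} < ⊤ := measure_singleton_lt_top
  by_cases hinj : Function.Injective fun n : ℤ => (e ^ n) x
  · rw [← iUnion_singleton_eq_range]
    exact ne_top_of_le_ne_top
      (tsum_measure_zpow_apply_ne_top hp hc he hec hT hhc hx (hsing x).ne hinj)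
      (measure_iUnion_le _)
  · rw [← biUnion_of_singleton (range _)]
    exact (measure_biUnion_lt_top (finite_range_zpow_apply_of_not_injective hinj)
      fun y _ => hsing y).ne

end Orbit

theorem stmt_10_general {X E : Type*} [MeasurableSpace X] [MeasurableSingletonClass X]
    [NormedAddCommGroup E] [NormedSpace ℝ E] [Nontrivial E]
    (μ : Measure X) (f : X → X) (c : ℝ≥0∞) (hsys : MeasSystem μ f c)
    (hatom : ∃ x, 0 < μ {x})
    (herg : ∀ A : Set X, MeasurableSet A → f ⁻¹' A = A → μ A = 0 ∨ μ (Set.univ \ A) = 0)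
    (p : ℝ≥0∞) [Fact (1 ≤ p)] (hp : p ≠ ⊤)
    (T : Lp E p μ →L[ℝ] Lp E p μ)
    (hT : ∀ φ : Lp E p μ, (T φ : X → E) =ᵐ[μ] fun x => (φ : X → E) (f x))
    (hhc : UpperFreqHC T) :
    μ Set.univ ≠ ⊤ := by
  obtain ⟨hfin, -, hf, -, -, hnonsing, -, hc, hbound⟩ := hsys
  obtain ⟨x, hx⟩ := hatom
  let e : Equiv.Perm X := Equiv.ofBijective f hf
  have hpreimage (y : X) : f ⁻¹' {f y} = {y} := by simp [preimage, hf.1.eq_iff]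
  have he (y : X) : μ {f y} ≠ 0 ↔ μ {y} ≠ 0 := by
    simpa [hpreimage] using (hnonsing {f y} (measurableSet_singleton _)).symm.not
  have hec (y : X) : μ {y} ≤ c * μ {f y} := by
    simpa [hpreimage] using hbound {f y} (measurableSet_singleton _)
  let O : Set X := range fun n : ℤ => (e ^ n) x
  have hO : μ O ≠ ⊤ := measure_range_zpow_apply_ne_top hp hc he hec hT hhc hx.ne'
  have hOpos : μ O ≠ 0 :=
    fun h => hx.ne' (measure_mono_null (singleton_subset_iff.2 (mem_range_self (0 : ℤ))) h)
  have hOinv : f ⁻¹' O = O := ext fun _ => Equiv.Perm.sameCycle_apply_right (f := e)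
  have hcompl : μ (univ \ O) = 0 :=
    (herg O (countable_range _).measurableSet hOinv).resolve_left hOpos
  exact ne_top_of_le_ne_top hO (measure_mono_ae (ae_le_set.2 hcompl))

/-- If `(X, B, μ, f)` is a dissipative measurable system with `μ` purely
atomic and `f` ergodic, and the composition operator `T_f` on `L^p(X)` is frequently
hypercyclic, then `μ(X) < ∞`. -/
theorem stmt_10 {X : Type*} [MeasurableSpace X] [MeasurableSingletonClass X]
    (μ : Measure X) (f : X → X) (c : ℝ≥0∞) (hsys : MeasSystem μ f c)
    (hdiss : Dissipative f)
    (hatomic : ∀ B : Set X, MeasurableSet B → 0 < μ B → ∃ x ∈ B, 0 < μ {x})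
    (herg : ∀ A : Set X, MeasurableSet A → f ⁻¹' A = A → μ A = 0 ∨ μ (Set.univ \ A) = 0)
    (p : ℝ≥0∞) [Fact (1 ≤ p)] (hp : p ≠ ⊤)
    (T : Lp ℝ p μ →L[ℝ] Lp ℝ p μ)
    (hT : ∀ φ : Lp ℝ p μ, (T φ : X → ℝ) =ᵐ[μ] fun x => (φ : X → ℝ) (f x))
    (hfh : FreqHC T) :
    μ Set.univ ≠ ⊤ := by
  obtain ⟨x, -, hx⟩ := hatomic univ .univ hsys.2.1
  exact stmt_10_general μ f c hsys ⟨x, hx⟩ herg p hp T hT hfh.upperFreqHC
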